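/- In any execution of algorithm ProactiveGreedy, every frame can be (re-)mapped by the mapping φ at most k times, and every frame is eventually mapped to a frame in F_PG; more precisely, if f_ℓ denotes the frame to which a frame f ∉ F_PG is mapped after its ℓ-th (re-)mapping, then w(f) + ℓ ≤ w(f_ℓ) for every ℓ, so after at most k remappings f is mapped to a frame f' with w(f') = k, i.e., f' ∈ F_PG. -/

import Mathlib

/-! ## Model: d-uniform bounded-delay goodput ({\sc d-uBDG}) instances -/

/-- An arrival sequence for the `d`-uniform bounded-delay goodput problem:
`n` frames, each consisting of `k` unit-size packets; packet `(f, ℓ)` (the `ℓ`-th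
packet of frame `f`, `0`-indexed) arrives at time `a f ℓ`, arrival times are
nondecreasing within each frame, and every packet has deadline `a f ℓ + d`. -/
structure ArrivalSeq (n k d : ℕ) where
  a : Fin n → Fin k → ℕ
  mono : ∀ f : Fin n, Monotone (a f)

namespace ArrivalSeq

variable {n k d : ℕ}

/-- At most `b` packets arrive in any single time slot (maximum burst size `b`). -/
def BurstBound (A : ArrivalSeq n k d) (b : ℕ) : Prop :=
  ∀ t : ℕ, Set.ncard {p : Fin n × Fin k | A.a p.1 p.2 = t} ≤ b

/-- A feasible schedule: at most one packet is delivered per time slot, every packet is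
delivered at most once, and every delivered packet is delivered between its arrival
time and its deadline. -/
def IsSchedule (A : ArrivalSeq n k d) (S : ℕ → Option (Fin n × Fin k)) : Prop :=
  (∀ (p : Fin n × Fin k) (t t' : ℕ), S t = some p → S t' = some p → t = t') ∧
  ∀ (p : Fin n × Fin k) (t : ℕ), S t = some p →
    A.a p.1 p.2 ≤ t ∧ t ≤ A.a p.1 p.2 + d

/-- A frame is successful under schedule `S` if all of its packets are delivered. -/
def Successful (A : ArrivalSeq n k d) (S : ℕ → Option (Fin n × Fin k)) (f : Fin n) : Prop :=
  ∀ ℓ : Fin k, ∃ t : ℕ, S t = some (f, ℓ)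

/-- The goodput of a schedule: the number of successful frames. -/
noncomputable def Goodput (A : ArrivalSeq n k d) (S : ℕ → Option (Fin n × Fin k)) : ℕ :=
  Set.ncard {f : Fin n | A.Successful S f}

/-- `S` is an optimal (feasible) schedule for `A`. -/
def IsOptimal (A : ArrivalSeq n k d) (S : ℕ → Option (Fin n × Fin k)) : Prop :=
  A.IsSchedule S ∧
    ∀ S' : ℕ → Option (Fin n × Fin k), A.IsSchedule S' → A.Goodput S' ≤ A.Goodput S

end ArrivalSeq

/-! ## Executions of scheduling algorithms -/

/-- A trace of the execution of a scheduling algorithm on the arrival sequence `A`: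
`deliver t` is the packet delivered at the scheduling substep of slot `t` (if any), and
`dropTime p` is the slot at which packet `p` is dropped by the algorithm (if ever). -/
structure AlgExec {n k d : ℕ} (A : ArrivalSeq n k d) where
  deliver : ℕ → Option (Fin n × Fin k)
  dropTime : Fin n × Fin k → Option ℕ

namespace AlgExec

variable {n k d : ℕ} {A : ArrivalSeq n k d}

/-- packet `p` is delivered at some time `≤ t`. -/
def DeliveredBy (E : AlgExec A) (p : Fin n × Fin k) (t : ℕ) : Prop :=
  ∃ s ≤ t, E.deliver s = some p

/-- packet `p` is delivered at some point of the execution. -/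
def Delivered (E : AlgExec A) (p : Fin n × Fin k) : Prop :=
  ∃ s : ℕ, E.deliver s = some p

/-- packet `p` is dropped at some time `< t`. -/
def DroppedBefore (E : AlgExec A) (p : Fin n × Fin k) (t : ℕ) : Prop :=
  ∃ s < t, E.dropTime p = some s

/-- packet `p` is pending at (the scheduling substep of) slot `t`: it has arrived, its
deadline has not passed, and it has been neither delivered nor dropped before `t`. -/
def Pending (E : AlgExec A) (p : Fin n × Fin k) (t : ℕ) : Prop :=
  A.a p.1 p.2 ≤ t ∧ t ≤ A.a p.1 p.2 + d ∧
    ¬ (∃ s < t, E.deliver s = some p) ∧ ¬ E.DroppedBefore p t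

/-- frame `f` is alive at time `t`: none of its packets has been dropped before `t`,
nor has expired (i.e., reached its deadline undelivered) before `t`. -/
def Alive (E : AlgExec A) (f : Fin n) (t : ℕ) : Prop :=
  ∀ ℓ : Fin k, ¬ E.DroppedBefore (f, ℓ) t ∧
    (A.a f ℓ + d < t → E.DeliveredBy (f, ℓ) (A.a f ℓ + d))

/-- frame `f` has some pending packet at time `t`. -/
def HasPending (E : AlgExec A) (f : Fin n) (t : ℕ) : Prop :=
  ∃ ℓ : Fin k, E.Pending (f, ℓ) t

/-- `I_t(f)`: the index of the first (minimal-index) pending packet of `f` at time `t`. -/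
noncomputable def Iidx (E : AlgExec A) (t : ℕ) (f : Fin n) : ℕ :=
  sInf {ℓ : ℕ | ∃ h : ℓ < k, E.Pending (f, ⟨ℓ, h⟩) t}

/-- frame `f` is completed by the execution: all of its packets are delivered. -/
def Completed (E : AlgExec A) (f : Fin n) : Prop :=
  ∀ ℓ : Fin k, E.Delivered (f, ℓ)

/-- `w f`: the number of packets of frame `f` delivered by the execution. -/
noncomputable def w (E : AlgExec A) (f : Fin n) : ℕ :=
  Set.ncard {ℓ : Fin k | E.Delivered (f, ℓ)}

/-- the first time at which some packet of `f` is dropped. -/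
noncomputable def dropT (E : AlgExec A) (f : Fin n) : ℕ :=
  sInf {t : ℕ | ∃ ℓ : Fin k, E.dropTime (f, ℓ) = some t}

/-- the index of the first packet of `f` to be dropped (the minimal index among the
packets of `f` dropped at the first drop time of `f`). -/
noncomputable def firstDropIdx (E : AlgExec A) (f : Fin n) : ℕ :=
  sInf {ℓ : ℕ | ∃ h : ℓ < k, E.dropTime (f, ⟨ℓ, h⟩) = some (E.dropT f)}

/-! ### The algorithm `ProactiveGreedy` -/

/-- The defining conditions of an execution of `ProactiveGreedy` (with arbitrary
tie-breaking): at every slot `t`,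
(i) a delivered packet is the first pending packet of an alive frame maximizing
`I_t` among all alive frames with pending packets;
(ii) a packet is delivered whenever some alive frame has a pending packet; and
(iii) a packet is dropped at `t` exactly when it is pending at `t` and either its
frame is not alive at `t` (line 1 of the algorithm) or the packet delivered at `t`
belongs to a different frame (line 4: packets of all non-chosen frames are dropped). -/
def PGValid (E : AlgExec A) : Prop :=
  (∀ (t : ℕ) (f : Fin n) (ℓ : Fin k), E.deliver t = some (f, ℓ) →
      E.Alive f t ∧ E.Pending (f, ℓ) t ∧ (ℓ : ℕ) = E.Iidx t f ∧
      ∀ f' : Fin n, E.Alive f' t → E.HasPending f' t → E.Iidx t f' ≤ E.Iidx t f) ∧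
  (∀ t : ℕ, (∃ f : Fin n, E.Alive f t ∧ E.HasPending f t) → E.deliver t ≠ none) ∧
  (∀ (p : Fin n × Fin k) (t : ℕ), E.dropTime p = some t ↔
      E.Pending p t ∧
        (¬ E.Alive p.1 t ∨ ∃ q : Fin n × Fin k, E.deliver t = some q ∧ q.1 ≠ p.1))

/-! ### The mapping `φ` used in the analysis of `ProactiveGreedy` -/

open Classical in
/-- The frame onto which a frame `f ∉ F_PG` is *directly* mapped by the mapping `φ`:
the frame whose packet is delivered at the time `t_f` at which the first packet of `f`
is dropped.  Frames of `F_PG` are mapped to themselves. -/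
noncomputable def phiNext (E : AlgExec A) (f : Fin n) : Fin n :=
  if E.Completed f then f
  else
    match E.deliver (E.dropT f) with
    | some q => q.1
    | none => f

/-- the frame onto which `f` is mapped after `j` successive (re-)mappings of `φ`. -/
noncomputable def phiChain (E : AlgExec A) (f : Fin n) (j : ℕ) : Fin n :=
  (E.phiNext)^[j] f

/-- frame `f` is *directly* mapped by `φ` via the packet `q` (of the frame `q.1`):
`q` is the packet delivered at the time the first packet of `f` is dropped. -/
def PhiDirectVia (E : AlgExec A) (f : Fin n) (q : Fin n × Fin k) : Prop :=
  ¬ E.Completed f ∧ E.deliver (E.dropT f) = some q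

/-- frame `f` is mapped (directly or indirectly, i.e. after re-mappings) by `φ`
via the packet `q`; `M(q)` is the set of frames mapped via `q`. -/
def PhiMappedVia (E : AlgExec A) (f : Fin n) (q : Fin n × Fin k) : Prop :=
  ∃ j : ℕ, E.PhiDirectVia (E.phiChain f j) q

/-! ### The algorithm `Greedy` -/

/-- packet `p` is still pending after the scheduling substep of slot `t`. -/
def PendingAfter (E : AlgExec A) (p : Fin n × Fin k) (t : ℕ) : Prop :=
  E.Pending p t ∧ E.deliver t ≠ some p

/-- frame `f` is infeasible after the scheduling substep of slot `t`: for some pending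
packet `(f, ℓ)` the pending packets of `f` of index `≤ ℓ` cannot all be scheduled in
the slots `t+1, …, a f ℓ + d`. -/
noncomputable def Infeasible (E : AlgExec A) (f : Fin n) (t : ℕ) : Prop :=
  ∃ ℓ : Fin k, E.PendingAfter (f, ℓ) t ∧
    A.a f ℓ + d < t + Set.ncard {j : Fin k | j ≤ ℓ ∧ E.PendingAfter (f, j) t}

/-- The defining conditions of an execution of `Greedy` (with arbitrary tie-breaking):
at every slot `t`,
(i) a delivered packet is the first pending packet of an alive frame maximizing `I_t`
among all alive frames with pending packets;
(ii) a packet is delivered whenever some alive frame has a pending packet; and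
(iii) a packet is dropped at `t` exactly when it is pending at `t`, it is not the
packet delivered at `t`, and either its frame is not alive at `t`, or its residual
slack at `t` is `0` (it expires), or its frame becomes infeasible at `t` (cleanup). -/
noncomputable def GreedyValid (E : AlgExec A) : Prop :=
  (∀ (t : ℕ) (f : Fin n) (ℓ : Fin k), E.deliver t = some (f, ℓ) →
      E.Alive f t ∧ E.Pending (f, ℓ) t ∧ (ℓ : ℕ) = E.Iidx t f ∧
      ∀ f' : Fin n, E.Alive f' t → E.HasPending f' t → E.Iidx t f' ≤ E.Iidx t f) ∧
  (∀ t : ℕ, (∃ f : Fin n, E.Alive f t ∧ E.HasPending f t) → E.deliver t ≠ none) ∧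
  (∀ (p : Fin n × Fin k) (t : ℕ), E.dropTime p = some t ↔
      E.Pending p t ∧ E.deliver t ≠ some p ∧
        (¬ E.Alive p.1 t ∨ A.a p.1 p.2 + d = t ∨ E.Infeasible p.1 t))

/-- packet `p = (f, ℓ)` is *eligible* at time `t`: it is in the buffer (pending) at
`t`, its frame is alive at `t`, and `ℓ = I_t(f)`. -/
def Eligible (E : AlgExec A) (p : Fin n × Fin k) (t : ℕ) : Prop :=
  E.Alive p.1 t ∧ E.Pending p t ∧ (p.2 : ℕ) = E.Iidx t p.1

/-! ### The mapping `ψ` used in the analysis of `Greedy` -/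

/-- The mapping `ψ` used in the analysis of `Greedy`, relative to the set `O` of frames
of a fixed optimal schedule and the maximum burst size `b`.  Every frame of
`F_G` (completed by `Greedy`) is mapped to itself (encoded as `dm f = none`); every
frame `f ∉ F_G` is directly mapped via a packet `q` delivered by `Greedy` no later than
the drop time `t_f` of `f`, whose index is at least the index of the first dropped
packet of `f`; every delivered packet has at most `2` frames of `O` and at most `b`
frames in total directly mapped to it. -/
structure PsiMapping (E : AlgExec A) (O : Set (Fin n)) (b : ℕ) where
  dm : Fin n → Option (Fin n × Fin k)
  mapsSelf : ∀ f : Fin n, E.Completed f → dm f = none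
  mapsAll : ∀ f : Fin n, ¬ E.Completed f → ∃ q : Fin n × Fin k, dm f = some q
  viaValid : ∀ (f : Fin n) (q : Fin n × Fin k), dm f = some q →
    E.firstDropIdx f ≤ (q.2 : ℕ) ∧ ∃ t ≤ E.dropT f, E.deliver t = some q
  capO : ∀ q : Fin n × Fin k, Set.ncard {f : Fin n | f ∈ O ∧ dm f = some q} ≤ 2
  capAll : ∀ q : Fin n × Fin k, Set.ncard {f : Fin n | dm f = some q} ≤ b

namespace PsiMapping

variable {E : AlgExec A} {O : Set (Fin n)} {b : ℕ}

/-- the frame onto which `f` is directly mapped by `ψ` (itself, if `f ∈ F_G`). -/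
def next (M : PsiMapping E O b) (f : Fin n) : Fin n :=
  match M.dm f with
  | some q => q.1
  | none => f

/-- the frame onto which `f` is mapped after `j` successive (re-)mappings of `ψ`. -/
def chain (M : PsiMapping E O b) (f : Fin n) (j : ℕ) : Fin n :=
  (M.next)^[j] f

/-- frame `f` is mapped (directly or indirectly) by `ψ` via the packet `q`;
`M(q)` is the set of frames mapped via `q`. -/
def MappedVia (M : PsiMapping E O b) (f : Fin n) (q : Fin n × Fin k) : Prop :=
  ∃ j : ℕ, M.dm (M.chain f j) = some q

end PsiMapping

end AlgExec

/-! Packets of a frame are delivered in order of their indices. Hence a frame `f` that is dropped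
at `t` while `I_t(f) = i` has received at most `i` deliveries, and it receives none from `t` on. The
frame `g` chosen at `t` maximizes `I_t`, so it gets a packet of index at least `i` delivered and,
being alive, has all of its earlier packets delivered: `w(g) ≥ i + 1 > w(f)`.

A frame `f ∉ F_PG` does have a dropped packet: while a packet of an undropped frame is pending, the
frame is served in every slot, and there are `d + 1 ≥ k` slots from the arrival of that packet to its
deadline, enough for all packets of the frame. -/

namespace AlgExec

variable {n k d : ℕ} {A : ArrivalSeq n k d} {E : AlgExec A}

section Basic

variable {f : Fin n} {ℓ : Fin k} {p : Fin n × Fin k} {s t : ℕ}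

theorem Pending.of_le (hp : E.Pending p t) (ha : A.a p.1 p.2 ≤ s) (hst : s ≤ t) :
    E.Pending p s :=
  ⟨ha, hst.trans hp.2.1, fun ⟨r, hr, hdel⟩ => hp.2.2.1 ⟨r, hr.trans_le hst, hdel⟩,
    fun ⟨r, hr, hdrop⟩ => hp.2.2.2 ⟨r, hr.trans_le hst, hdrop⟩⟩

theorem Iidx_le_of_pending (hp : E.Pending (f, ℓ) t) : E.Iidx t f ≤ ℓ :=
  Nat.sInf_le ⟨ℓ.2, hp⟩

theorem HasPending.exists_pending_Iidx (hf : E.HasPending f t) :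
    ∃ i : Fin k, (i : ℕ) = E.Iidx t f ∧ E.Pending (f, i) t := by
  obtain ⟨ℓ, hℓ⟩ := hf
  have hne : {i : ℕ | ∃ h : i < k, E.Pending (f, ⟨i, h⟩) t}.Nonempty := ⟨ℓ, ℓ.2, hℓ⟩
  obtain ⟨hi, hp⟩ := Nat.sInf_mem hne
  exact ⟨⟨E.Iidx t f, hi⟩, rfl, hp⟩

theorem Alive.delivered_or_pending (hf : E.Alive f t) (ha : A.a f ℓ ≤ t) :
    E.Delivered (f, ℓ) ∨ E.Pending (f, ℓ) t := by
  by_cases hdel : E.Delivered (f, ℓ)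
  · exact .inl hdel
  · have hdeadline : t ≤ A.a f ℓ + d := by
      by_contra! hlt
      obtain ⟨s, -, hs⟩ := (hf ℓ).2 hlt
      exact hdel ⟨s, hs⟩
    exact .inr ⟨ha, hdeadline, fun ⟨s, _, hs⟩ => hdel ⟨s, hs⟩, (hf ℓ).1⟩

theorem dropT_lt_of_droppedBefore (h : E.DroppedBefore (f, ℓ) t) : E.dropT f < t := by
  obtain ⟨s, hst, hs⟩ := h
  have hle : E.dropT f ≤ s := Nat.sInf_le ⟨ℓ, hs⟩
  exact hle.trans_lt hst

end Basic

section Weight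

variable {f : Fin n} {i : Fin k}

theorem w_le (E : AlgExec A) (f : Fin n) : E.w f ≤ k := by
  simpa only [w, Nat.card_fin] using Set.ncard_le_card {ℓ : Fin k | E.Delivered (f, ℓ)}

theorem w_le_of_forall_delivered_lt (h : ∀ ℓ, E.Delivered (f, ℓ) → ℓ < i) : E.w f ≤ i := by
  calc E.w f ≤ (Finset.Iio i : Set (Fin k)).ncard :=
        Set.ncard_le_ncard fun ℓ hℓ => Finset.mem_coe.2 (Finset.mem_Iio.2 (h ℓ hℓ))
    _ = i := by rw [Set.ncard_coe_finset, Fin.card_Iio]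

theorem lt_w_of_forall_le_delivered (h : ∀ ℓ ≤ i, E.Delivered (f, ℓ)) : i < E.w f := by
  calc (i : ℕ) < (Finset.Iic i : Set (Fin k)).ncard := by
        rw [Set.ncard_coe_finset, Fin.card_Iic]
        exact Nat.lt_succ_self i
    _ ≤ E.w f := Set.ncard_le_ncard fun ℓ hℓ => h ℓ (Finset.mem_Iic.1 (Finset.mem_coe.1 hℓ))

end Weight

section PhiChain

variable {f : Fin n} {q : Fin n × Fin k}

theorem phiNext_of_completed (hf : E.Completed f) : E.phiNext f = f :=
  if_pos hf

theorem phiNext_of_phiDirectVia (h : E.PhiDirectVia f q) : E.phiNext f = q.1 := by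
  simp only [phiNext, if_neg h.1, h.2]

theorem phiChain_succ (E : AlgExec A) (f : Fin n) (j : ℕ) :
    E.phiChain f (j + 1) = E.phiNext (E.phiChain f j) :=
  Function.iterate_succ_apply' _ _ _

theorem Completed.phiChain_succ {j : ℕ} (h : E.Completed (E.phiChain f j)) :
    E.Completed (E.phiChain f (j + 1)) := by
  rwa [AlgExec.phiChain_succ, phiNext_of_completed h]

end PhiChain

namespace PGValid

variable {f g : Fin n} {i ℓ : Fin k} {p : Fin n × Fin k} {s t : ℕ}

theorem alive_of_deliver (hE : E.PGValid) (h : E.deliver t = some (f, ℓ)) : E.Alive f t :=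
  (hE.1 t f ℓ h).1

theorem pending_of_deliver (hE : E.PGValid) (h : E.deliver t = some (f, ℓ)) :
    E.Pending (f, ℓ) t :=
  (hE.1 t f ℓ h).2.1

theorem eq_Iidx_of_deliver (hE : E.PGValid) (h : E.deliver t = some (f, ℓ)) :
    (ℓ : ℕ) = E.Iidx t f :=
  (hE.1 t f ℓ h).2.2.1

theorem Iidx_le_Iidx_of_deliver (hE : E.PGValid) (h : E.deliver t = some (g, ℓ))
    (hf : E.Alive f t) (hpend : E.HasPending f t) : E.Iidx t f ≤ E.Iidx t g :=
  (hE.1 t g ℓ h).2.2.2 f hf hpend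

theorem dropTime_eq_some_iff (hE : E.PGValid) :
    E.dropTime p = some t ↔
      E.Pending p t ∧
        (¬ E.Alive p.1 t ∨ ∃ q : Fin n × Fin k, E.deliver t = some q ∧ q.1 ≠ p.1) :=
  hE.2.2 p t

theorem eq_of_deliver_eq (hE : E.PGValid) (hs : E.deliver s = some p)
    (ht : E.deliver t = some p) : s = t := by
  wlog hst : s < t generalizing s t
  · exact (not_lt.1 hst).eq_or_lt.elim Eq.symm fun hts => (this ht hs hts).symm
  · exact absurd ⟨s, hst, hs⟩ (hE.pending_of_deliver ht).2.2.1

theorem exists_deliver_of_dropTime_ne (hE : E.PGValid) (hf : E.Alive f t)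
    (hp : E.Pending (f, ℓ) t) (hdrop : E.dropTime (f, ℓ) ≠ some t) :
    ∃ m : Fin k, E.deliver t = some (f, m) := by
  obtain ⟨⟨g, m⟩, hq⟩ := Option.ne_none_iff_exists'.1 (hE.2.1 t ⟨f, hf, ℓ, hp⟩)
  obtain rfl : g = f := by
    by_contra hgf
    exact hdrop (hE.dropTime_eq_some_iff.2 ⟨hp, .inr ⟨(g, m), hq, hgf⟩⟩)
  exact ⟨m, hq⟩

theorem deliveredBy_deadline (hE : E.PGValid) (hkd : k ≤ d + 1)
    (halive : ∀ t ≤ A.a f ℓ + d, E.Alive f t)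
    (hdrop : ∀ t ≤ A.a f ℓ + d, E.dropTime (f, ℓ) ≠ some t) :
    E.DeliveredBy (f, ℓ) (A.a f ℓ + d) := by
  by_contra hdel
  have hserved : ∀ t ∈ Finset.Icc (A.a f ℓ) (A.a f ℓ + d),
      ∃ m ∈ Finset.univ.erase ℓ, E.deliver t = some (f, m) := by
    intro t ht
    obtain ⟨ha, hdl⟩ := Finset.mem_Icc.1 ht
    have hpend : E.Pending (f, ℓ) t :=
      ⟨ha, hdl, fun ⟨s, hs, h⟩ => hdel ⟨s, hs.le.trans hdl, h⟩,
        fun ⟨s, hs, h⟩ => hdrop s (hs.le.trans hdl) h⟩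
    obtain ⟨m, hm⟩ := hE.exists_deliver_of_dropTime_ne (halive t hdl) hpend (hdrop t hdl)
    have hmℓ : m ≠ ℓ := by
      rintro rfl
      exact hdel ⟨t, hdl, hm⟩
    exact ⟨m, Finset.mem_erase.2 ⟨hmℓ, Finset.mem_univ m⟩, hm⟩
  have hcard : (Finset.univ.erase ℓ).card < (Finset.Icc (A.a f ℓ) (A.a f ℓ + d)).card := by
    rw [Finset.card_erase_of_mem (Finset.mem_univ ℓ), Finset.card_fin, Nat.card_Icc]
    have := ℓ.pos
    omega
  have : Nonempty (Fin k) := ⟨ℓ⟩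
  choose! m hm hdeliver using hserved
  obtain ⟨s, hs, t, ht, hst, hms⟩ := Finset.exists_ne_map_eq_of_card_lt_of_maps_to hcard hm
  exact hst (hE.eq_of_deliver_eq (hdeliver s hs) (hms ▸ hdeliver t ht))

theorem alive_of_forall_not_droppedBefore (hE : E.PGValid) (hkd : k ≤ d + 1)
    (h : ∀ ℓ : Fin k, ¬ E.DroppedBefore (f, ℓ) t) : E.Alive f t := by
  induction t using Nat.strong_induction_on with
  | _ t ih =>
    refine fun ℓ => ⟨h ℓ, fun hexp => hE.deliveredBy_deadline hkd (fun s hs => ?_) ?_⟩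
    · have hst := hs.trans_lt hexp
      exact ih s hst fun m ⟨r, hr, hdrop⟩ => h m ⟨r, hr.trans hst, hdrop⟩
    · exact fun s hs hdrop => h ℓ ⟨s, hs.trans_lt hexp, hdrop⟩

theorem completed_of_forall_dropTime_ne (hE : E.PGValid) (hkd : k ≤ d + 1)
    (h : ∀ (ℓ : Fin k) (t : ℕ), E.dropTime (f, ℓ) ≠ some t) : E.Completed f := by
  have halive (t : ℕ) : E.Alive f t :=
    hE.alive_of_forall_not_droppedBefore hkd fun ℓ ⟨s, _, hs⟩ => h ℓ s hs
  intro ℓ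
  obtain ⟨s, -, hs⟩ := hE.deliveredBy_deadline hkd (fun t _ => halive t) fun t _ => h ℓ t
  exact ⟨s, hs⟩

theorem exists_dropTime_eq_dropT (hE : E.PGValid) (hkd : k ≤ d + 1) (hf : ¬ E.Completed f) :
    ∃ ℓ : Fin k, E.dropTime (f, ℓ) = some (E.dropT f) := by
  have hne : {t : ℕ | ∃ ℓ : Fin k, E.dropTime (f, ℓ) = some t}.Nonempty := by
    by_contra hempty
    exact hf (hE.completed_of_forall_dropTime_ne hkd fun ℓ t h => hempty ⟨t, ℓ, h⟩)
  exact Nat.sInf_mem hne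

theorem alive_dropT (hE : E.PGValid) (hkd : k ≤ d + 1) (f : Fin n) : E.Alive f (E.dropT f) :=
  hE.alive_of_forall_not_droppedBefore hkd fun _ h => (dropT_lt_of_droppedBefore h).false

theorem lt_of_deliver_of_dropTime (hE : E.PGValid) (hdel : E.deliver s = some (f, i))
    (hdrop : E.dropTime (f, ℓ) = some t) : s < t := by
  have halive := hE.alive_of_deliver hdel
  rcases lt_trichotomy s t with hst | rfl | hts
  · exact hst
  · obtain hdead | ⟨q, hq, hqf⟩ := (hE.dropTime_eq_some_iff.1 hdrop).2
    · exact absurd halive hdead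
    · obtain rfl : (f, i) = q := Option.some.inj (hdel.symm.trans hq)
      exact absurd rfl hqf
  · exact absurd ⟨t, hts, hdrop⟩ (halive ℓ).1

theorem lt_Iidx_of_deliver_of_lt (hE : E.PGValid) (hdel : E.deliver s = some (f, ℓ))
    (hst : s < t) (hpend : E.HasPending f t) : ℓ < E.Iidx t f := by
  obtain ⟨i, hi, hp⟩ := hpend.exists_pending_Iidx
  rw [← hi, Fin.val_fin_lt]
  by_contra! hiℓ
  have hps : E.Pending (f, i) s :=
    hp.of_le ((A.mono f hiℓ).trans (hE.pending_of_deliver hdel).1) hst.le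
  have hℓi : (ℓ : ℕ) ≤ i := (hE.eq_Iidx_of_deliver hdel).trans_le (Iidx_le_of_pending hps)
  obtain rfl : ℓ = i := le_antisymm hℓi hiℓ
  exact hp.2.2.1 ⟨s, hst, hdel⟩

theorem w_le_Iidx_of_dropTime (hE : E.PGValid) (hdrop : E.dropTime (f, ℓ) = some t) :
    E.w f ≤ E.Iidx t f := by
  have hpend : E.HasPending f t := ⟨ℓ, (hE.dropTime_eq_some_iff.1 hdrop).1⟩
  obtain ⟨i, hi, -⟩ := hpend.exists_pending_Iidx
  rw [← hi]
  refine w_le_of_forall_delivered_lt fun m ⟨s, hs⟩ => ?_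
  rw [← Fin.val_fin_lt, hi]
  exact hE.lt_Iidx_of_deliver_of_lt hs (hE.lt_of_deliver_of_dropTime hs hdrop) hpend

theorem delivered_of_le_of_deliver (hE : E.PGValid) (hdel : E.deliver t = some (f, ℓ))
    (hiℓ : i ≤ ℓ) : E.Delivered (f, i) := by
  obtain rfl | hlt := hiℓ.eq_or_lt
  · exact ⟨t, hdel⟩
  · have ha : A.a f i ≤ t := (A.mono f hiℓ).trans (hE.pending_of_deliver hdel).1
    refine ((hE.alive_of_deliver hdel).delivered_or_pending ha).resolve_right fun hp => ?_
    exact ((hE.eq_Iidx_of_deliver hdel).trans_le (Iidx_le_of_pending hp)).not_gt hlt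

theorem Iidx_lt_w_of_deliver (hE : E.PGValid) (hdel : E.deliver t = some (f, ℓ)) :
    E.Iidx t f < E.w f := by
  rw [← hE.eq_Iidx_of_deliver hdel]
  exact lt_w_of_forall_le_delivered fun _ => hE.delivered_of_le_of_deliver hdel

theorem w_lt_w_phiNext (hE : E.PGValid) (hkd : k ≤ d + 1) (hf : ¬ E.Completed f) :
    E.w f < E.w (E.phiNext f) := by
  obtain ⟨ℓ, hdrop⟩ := hE.exists_dropTime_eq_dropT hkd hf
  have halive := hE.alive_dropT hkd f
  obtain ⟨hpend, hreason⟩ := hE.dropTime_eq_some_iff.1 hdrop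
  obtain ⟨⟨g, m⟩, hdel, -⟩ := hreason.resolve_left (not_not.2 halive)
  rw [phiNext_of_phiDirectVia ⟨hf, hdel⟩]
  calc E.w f ≤ E.Iidx (E.dropT f) f := hE.w_le_Iidx_of_dropTime hdrop
    _ ≤ E.Iidx (E.dropT f) g := hE.Iidx_le_Iidx_of_deliver hdel halive ⟨ℓ, hpend⟩
    _ < E.w g := hE.Iidx_lt_w_of_deliver hdel

theorem w_add_succ_le_w_phiChain_succ (hE : E.PGValid) (hkd : k ≤ d + 1) {j : ℕ}
    (hj : ¬ E.Completed (E.phiChain f j)) :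
    E.w f + (j + 1) ≤ E.w (E.phiChain f (j + 1)) := by
  induction j with
  | zero => exact hE.w_lt_w_phiNext hkd hj
  | succ j ih =>
    calc E.w f + (j + 1 + 1) ≤ E.w (E.phiChain f (j + 1)) + 1 :=
          Nat.succ_le_succ (ih (mt Completed.phiChain_succ hj))
      _ ≤ E.w (E.phiChain f (j + 1 + 1)) := by
          rw [E.phiChain_succ f (j + 1)]
          exact hE.w_lt_w_phiNext hkd hj

theorem completed_phiChain (hE : E.PGValid) (hkd : k ≤ d + 1) (f : Fin n) :
    E.Completed (E.phiChain f k) := by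
  by_contra hk
  have hlower := hE.w_add_succ_le_w_phiChain_succ hkd hk
  have hupper := E.w_le (E.phiChain f (k + 1))
  omega

end PGValid

end AlgExec

theorem pg_remapping_length_general (n k d : ℕ) (hkd : k ≤ d + 1)
    (A : ArrivalSeq n k d) (E : AlgExec A) (hE : E.PGValid) :
    (∀ f : Fin n, ∀ j : ℕ, ¬ E.Completed (E.phiChain f j) →
      E.w f + (j + 1) ≤ E.w (E.phiChain f (j + 1))) ∧
    ∀ f : Fin n, ∃ j ≤ k, E.Completed (E.phiChain f j) :=
  ⟨fun _ _ hj => hE.w_add_succ_le_w_phiChain_succ hkd hj,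
    fun f => ⟨k, le_rfl, hE.completed_phiChain hkd f⟩⟩

/-- In any execution of `ProactiveGreedy`, every frame is (re-)mapped
by `φ` at most `k` times and is eventually mapped to a frame of `F_PG`; more precisely,
whenever the frame `f_j` obtained from `f` after `j` (re-)mappings is itself remapped
(i.e. `f_j ∉ F_PG`), its successor satisfies `w f + (j + 1) ≤ w f_{j+1}`, so after at
most `k` remappings `f` is mapped to a frame `f'` with `w f' = k`, i.e. `f' ∈ F_PG`. -/
theorem pg_remapping_length (n k d : ℕ) (hkd : k ≤ d)
    (A : ArrivalSeq n k d) (E : AlgExec A) (hE : E.PGValid) :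
    (∀ f : Fin n, ∀ j : ℕ, ¬ E.Completed (E.phiChain f j) →
      E.w f + (j + 1) ≤ E.w (E.phiChain f (j + 1))) ∧
    ∀ f : Fin n, ∃ j ≤ k, E.Completed (E.phiChain f j) :=
  pg_remapping_length_general n k d (Nat.le_succ_of_le hkd) A E hE
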